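/- The differential δ : F → F is injective, its range is exactly the subspace of functions vanishing at 0, the quotient F/range(δ) is one-dimensional spanned by the class of the indicator function δ₀, and the constant function 𝟏 and δ₀ represent the same nonzero class (i.e. 𝟏 − δ₀ ∈ range(δ)). -/

import Mathlib

noncomputable section

/-- The differential `δ : F → F` (degree 1 → degree 0) on formal series
`F = (ℕ → ℚ)`, dual of `d` on `Λ(t,dt)`: `(δμ)(0) = 0`, `(δμ)(j) = j·μ(j-1)`. -/
def deltaDiff : (ℕ → ℚ) →ₗ[ℚ] (ℕ → ℚ) where
  toFun μ := fun j => if j = 0 then 0 else (j : ℚ) * μ (j - 1)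
  map_add' μ ν := by
    funext j
    by_cases h : j = 0 <;> simp [h, mul_add]
  map_smul' a μ := by
    funext j
    by_cases h : j = 0 <;> simp [h, smul_eq_mul] <;> ring

/-- The indicator function of `0` (the series `α₀`). -/
def ind0 : ℕ → ℚ := fun j => if j = 0 then 1 else 0

/-!
The differential shifts a series by one place and multiplies its coefficients by the nonzero
numbers `1, 2, 3, …`. Hence no information is lost, and the only coefficient it cannot produce is
the one at `0`: evaluation at `0` identifies the homology with `ℚ`, and a series generates it as
soon as its coefficient at `0` is nonzero.
-/

theorem span_singleton_quotientMk_eq_top_iff {R M : Type*} [Ring R] [AddCommGroup M] [Module R M]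
    {p : Submodule R M} {x : M} :
    Submodule.span R {Submodule.Quotient.mk (p := p) x} = ⊤ ↔ p ⊔ Submodule.span R {x} = ⊤ := by
  rw [← Submodule.map_mkQ_eq_top, Submodule.map_span, Set.image_singleton, Submodule.mkQ_apply]

@[simp]
theorem deltaDiff_apply_zero (μ : ℕ → ℚ) : deltaDiff μ 0 = 0 := rfl

@[simp]
theorem deltaDiff_apply_succ (μ : ℕ → ℚ) (j : ℕ) :
    deltaDiff μ (j + 1) = ((j : ℚ) + 1) * μ j := by
  simp [deltaDiff]

@[simp]
theorem ind0_zero : ind0 0 = 1 := rfl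

theorem deltaDiff_injective : Function.Injective deltaDiff := by
  intro μ ν h
  funext j
  have hj : ((j : ℚ) + 1) * μ j = ((j : ℚ) + 1) * ν j := by
    simpa only [deltaDiff_apply_succ] using congrFun h (j + 1)
  exact mul_left_cancel₀ j.cast_add_one_ne_zero hj

theorem mem_range_deltaDiff {f : ℕ → ℚ} : f ∈ LinearMap.range deltaDiff ↔ f 0 = 0 := by
  constructor
  · rintro ⟨μ, rfl⟩
    exact deltaDiff_apply_zero μ
  · intro hf
    refine ⟨fun j => f (j + 1) / ((j : ℚ) + 1), funext fun j => ?_⟩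
    cases j with
    | zero => rw [deltaDiff_apply_zero, hf]
    | succ j => rw [deltaDiff_apply_succ, mul_div_cancel₀ _ j.cast_add_one_ne_zero]

theorem range_deltaDiff :
    LinearMap.range deltaDiff = LinearMap.ker (LinearMap.proj 0 : (ℕ → ℚ) →ₗ[ℚ] ℚ) := by
  ext f
  rw [mem_range_deltaDiff, LinearMap.mem_ker, LinearMap.proj_apply]

theorem span_singleton_quotientMk_range_deltaDiff_eq_top {f : ℕ → ℚ} (hf : f 0 ≠ 0) :
    Submodule.span ℚ {Submodule.Quotient.mk (p := LinearMap.range deltaDiff) f} = ⊤ := by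
  rw [span_singleton_quotientMk_eq_top_iff, range_deltaDiff, sup_comm]
  exact LinearMap.span_singleton_sup_ker_eq_top _ hf

theorem quotientMk_range_deltaDiff_eq_zero_iff {f : ℕ → ℚ} :
    Submodule.Quotient.mk (p := LinearMap.range deltaDiff) f = 0 ↔ f 0 = 0 := by
  rw [Submodule.Quotient.mk_eq_zero, mem_range_deltaDiff]

/-- `δ` is injective, its range is exactly the functions vanishing at `0`
(the kernel of evaluation at `0`), the quotient `F/range δ` is one-dimensional
spanned by the nonzero class of `α₀`, and `𝟏` and `α₀` represent the same
class: `𝟏 - α₀ ∈ range δ`.  (The homology of the universal coalgebra `𝔅` is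
one-dimensional, concentrated in degree 0, generated by `[α₀] = [∑_i α_i]`.) -/
theorem deltaDiff_homology :
    Function.Injective deltaDiff ∧
    LinearMap.range deltaDiff =
      LinearMap.ker (LinearMap.proj 0 : (ℕ → ℚ) →ₗ[ℚ] ℚ) ∧
    Submodule.span ℚ
      {Submodule.Quotient.mk (p := LinearMap.range deltaDiff) ind0} = ⊤ ∧
    Submodule.Quotient.mk (p := LinearMap.range deltaDiff) ind0 ≠ 0 ∧
    ((fun _ => (1 : ℚ)) - ind0) ∈ LinearMap.range deltaDiff := by
  have hind : ind0 0 ≠ 0 := by simp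
  have hsub : ((fun _ => 1) - ind0 : ℕ → ℚ) 0 = 0 := by simp
  exact ⟨deltaDiff_injective, range_deltaDiff,
    span_singleton_quotientMk_range_deltaDiff_eq_top hind,
    quotientMk_range_deltaDiff_eq_zero_iff.not.mpr hind, mem_range_deltaDiff.mpr hsub⟩

end
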